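/- Let β ∈ {0,1}, λ > 0, and define m_{β,λ}(r) = m_β(λ r) for r > 0. Then for every integer k ≥ 0 there is a constant C_k depending only on k such that for all r with 1/2 ≤ r ≤ 2 (i.e., r ∼ 1), |∂_r^k ( 1 / m_{β,λ}'(r) )| ≤ C_k λ^{-1} ⟨√β λ⟩^{-1} ⟨λ⟩^{1/2}. -/

import Mathlib

noncomputable section

open Real

/-- Japanese bracket `⟨x⟩ = (1+|x|²)^{1/2}`. -/
def jap (x : ℝ) : ℝ := Real.sqrt (1 + x ^ 2)

/-- The symbol `m_β(r) = √(r(1+βr²)tanh r)`. -/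
def mSymb (β r : ℝ) : ℝ := Real.sqrt (r * (1 + β * r ^ 2) * Real.tanh r)

/-- `DerivBound s n F W`: on the set `s`, each member `F i` of the family is `n` times
differentiable, and its derivatives of order at most `n` are bounded by constant multiples of
`W i`, uniformly in `i`. -/
def DerivBound {ι : Type*} (s : Set ℝ) : ℕ → (ι → ℝ → ℝ) → (ι → ℝ) → Prop
  | 0, F, W => ∃ C, 0 ≤ C ∧ ∀ i, ∀ r ∈ s, |F i r| ≤ C * W i
  | n + 1, F, W => (∃ C, 0 ≤ C ∧ ∀ i, ∀ r ∈ s, |F i r| ≤ C * W i) ∧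
      ∃ F' : ι → ℝ → ℝ, (∀ i, ∀ r ∈ s, HasDerivAt (F i) (F' i r) r) ∧ DerivBound s n F' W

namespace DerivBound

variable {ι : Type*} {s : Set ℝ} {n : ℕ} {F G : ι → ℝ → ℝ} {V W : ι → ℝ}

theorem bound (h : DerivBound s n F W) : ∃ C, 0 ≤ C ∧ ∀ i, ∀ r ∈ s, |F i r| ≤ C * W i := by
  cases n with
  | zero => exact h
  | succ n => exact h.1

theorem of_succ (h : DerivBound s (n + 1) F W) : DerivBound s n F W := by
  induction n generalizing F with
  | zero => exact h.1
  | succ n ih =>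
    obtain ⟨hb, F', hd, h'⟩ := h
    exact ⟨hb, F', hd, ih h'⟩

theorem congr (hs : IsOpen s) (h : DerivBound s n F W) (hFG : ∀ i, ∀ r ∈ s, G i r = F i r) :
    DerivBound s n G W := by
  have hb : ∃ C, 0 ≤ C ∧ ∀ i, ∀ r ∈ s, |G i r| ≤ C * W i := by
    obtain ⟨C, hC, hb⟩ := h.bound
    exact ⟨C, hC, fun i r hr => by rw [hFG i r hr]; exact hb i r hr⟩
  cases n with
  | zero => exact hb
  | succ n =>
    obtain ⟨-, F', hd, h'⟩ := h
    refine ⟨hb, F', fun i r hr => (hd i r hr).congr_of_eventuallyEq ?_, h'⟩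
    filter_upwards [hs.mem_nhds hr] with x hx using hFG i x hx

theorem weight_mono (h : DerivBound s n F V) {K : ℝ} (hK : 0 ≤ K) (hVW : ∀ i, V i ≤ K * W i) :
    DerivBound s n F W := by
  have mono : ∀ {F : ι → ℝ → ℝ}, (∃ C, 0 ≤ C ∧ ∀ i, ∀ r ∈ s, |F i r| ≤ C * V i) →
      ∃ C, 0 ≤ C ∧ ∀ i, ∀ r ∈ s, |F i r| ≤ C * W i := by
    rintro F ⟨C, hC, hb⟩
    refine ⟨C * K, by positivity, fun i r hr => (hb i r hr).trans ?_⟩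
    rw [mul_assoc]
    exact mul_le_mul_of_nonneg_left (hVW i) hC
  induction n generalizing F with
  | zero => exact mono h
  | succ n ih =>
    obtain ⟨hb, F', hd, h'⟩ := h
    exact ⟨mono hb, F', hd, ih h'⟩

theorem const {c : ι → ℝ} {K : ℝ} (hK : 0 ≤ K) (hW : ∀ i, 0 ≤ W i) (hc : ∀ i, |c i| ≤ K * W i) :
    DerivBound s n (fun i _ => c i) W := by
  have zero : ∀ n, DerivBound s n (fun (_ : ι) (_ : ℝ) => (0 : ℝ)) W := by
    intro n
    have hb : ∃ C, 0 ≤ C ∧ ∀ i, ∀ r ∈ s, |(0 : ℝ)| ≤ C * W i :=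
      ⟨1, zero_le_one, fun i r _ => by simpa using hW i⟩
    induction n with
    | zero => exact hb
    | succ n ih => exact ⟨hb, _, fun i r _ => hasDerivAt_const r 0, ih⟩
  cases n with
  | zero => exact ⟨K, hK, fun i r _ => hc i⟩
  | succ n => exact ⟨⟨K, hK, fun i r _ => hc i⟩, _, fun i r _ => hasDerivAt_const r _, zero n⟩

theorem id {K : ℝ} (hs : ∀ r ∈ s, |r| ≤ K) :
    DerivBound s n (fun (_ : ι) r => r) (fun _ => 1) := by
  have hb : ∃ C, 0 ≤ C ∧ ∀ (i : ι), ∀ r ∈ s, |r| ≤ C * 1 :=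
    ⟨|K|, abs_nonneg K, fun _ r hr => by simpa using (hs r hr).trans (le_abs_self K)⟩
  cases n with
  | zero => exact hb
  | succ n =>
    exact ⟨hb, fun _ _ => 1, fun _ r _ => hasDerivAt_id r,
      const zero_le_one (fun _ => zero_le_one) (fun _ => by simp)⟩

theorem add (hF : DerivBound s n F W) (hG : DerivBound s n G W) :
    DerivBound s n (fun i r => F i r + G i r) W := by
  induction n generalizing F G with
  | zero =>
    obtain ⟨C, hC, hF⟩ := hF
    obtain ⟨D, hD, hG⟩ := hG
    refine ⟨C + D, by positivity, fun i r hr => (abs_add_le _ _).trans ?_⟩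
    rw [add_mul]
    exact add_le_add (hF i r hr) (hG i r hr)
  | succ n ih =>
    obtain ⟨⟨C, hC, hFb⟩, F', hF', hFn⟩ := hF
    obtain ⟨⟨D, hD, hGb⟩, G', hG', hGn⟩ := hG
    refine ⟨⟨C + D, by positivity, fun i r hr => (abs_add_le _ _).trans ?_⟩,
      _, fun i r hr => (hF' i r hr).add (hG' i r hr), ih hFn hGn⟩
    rw [add_mul]
    exact add_le_add (hFb i r hr) (hGb i r hr)

theorem mul_bound (hF : DerivBound s n F V) (hG : DerivBound s n G W) :
    ∃ C, 0 ≤ C ∧ ∀ i, ∀ r ∈ s, |F i r * G i r| ≤ C * (V i * W i) := by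
  obtain ⟨C, hC, hFb⟩ := hF.bound
  obtain ⟨D, hD, hGb⟩ := hG.bound
  refine ⟨C * D, by positivity, fun i r hr => ?_⟩
  rw [abs_mul, mul_mul_mul_comm]
  exact mul_le_mul (hFb i r hr) (hGb i r hr) (abs_nonneg _) ((abs_nonneg _).trans (hFb i r hr))

theorem mul (hF : DerivBound s n F V) (hG : DerivBound s n G W) :
    DerivBound s n (fun i r => F i r * G i r) (fun i => V i * W i) := by
  induction n generalizing F G with
  | zero => exact hF.mul_bound hG
  | succ n ih =>
    have hb := hF.mul_bound hG
    have hF₀ := hF.of_succ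
    have hG₀ := hG.of_succ
    obtain ⟨-, F', hF', hFn⟩ := hF
    obtain ⟨-, G', hG', hGn⟩ := hG
    exact ⟨hb, _, fun i r hr => (hF' i r hr).mul (hG' i r hr), (ih hFn hG₀).add (ih hF₀ hGn)⟩

/-- Real powers of a family which is bounded below by its weight. -/
theorem rpow (hF : DerivBound s n F W) (hW : ∀ i, 0 < W i) {c : ℝ} (hc : 0 < c)
    (hlow : ∀ i, ∀ r ∈ s, c * W i ≤ F i r) (a : ℝ) :
    DerivBound s n (fun i r => F i r ^ a) (fun i => W i ^ a) := by
  have hpos : ∀ i, ∀ r ∈ s, 0 < F i r := fun i r hr =>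
    (mul_pos hc (hW i)).trans_le (hlow i r hr)
  have hb : ∀ a : ℝ, ∃ C, 0 ≤ C ∧ ∀ i, ∀ r ∈ s, |F i r ^ a| ≤ C * W i ^ a := by
    intro a
    obtain ⟨C, hC, hFb⟩ := hF.bound
    rcases le_total 0 a with ha | ha
    · refine ⟨C ^ a, by positivity, fun i r hr => ?_⟩
      rw [abs_of_pos (Real.rpow_pos_of_pos (hpos i r hr) a), ← Real.mul_rpow hC (hW i).le]
      exact Real.rpow_le_rpow (hpos i r hr).le ((le_abs_self _).trans (hFb i r hr)) ha
    · refine ⟨c ^ a, by positivity, fun i r hr => ?_⟩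
      rw [abs_of_pos (Real.rpow_pos_of_pos (hpos i r hr) a), ← Real.mul_rpow hc.le (hW i).le]
      exact Real.rpow_le_rpow_of_nonpos (mul_pos hc (hW i)) (hlow i r hr) ha
  induction n generalizing a with
  | zero => exact hb a
  | succ n ih =>
    have hF₀ := hF.of_succ
    obtain ⟨-, F', hF', hFn⟩ := hF
    refine ⟨hb a, _, fun i r hr => (hF' i r hr).rpow_const (Or.inl (hpos i r hr).ne'), ?_⟩
    have hca : DerivBound s n (fun (_ : ι) (_ : ℝ) => a) (fun _ => 1) :=
      const (abs_nonneg a) (fun _ => zero_le_one) (fun _ => by simp)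
    refine ((hFn.mul hca).mul (ih hF₀ (a - 1))).weight_mono zero_le_one fun i => ?_
    rw [Real.rpow_sub_one (hW i).ne']
    have := (hW i).ne'
    apply le_of_eq
    field_simp

theorem abs_iteratedDeriv_le (hs : IsOpen s) (h : DerivBound s n F W) :
    ∃ C, 0 ≤ C ∧ ∀ i, ∀ r ∈ s, |iteratedDeriv n (F i) r| ≤ C * W i := by
  induction n generalizing F with
  | zero => simpa using h.bound
  | succ n ih =>
    obtain ⟨-, F', hd, h'⟩ := h
    simpa only [iteratedDeriv_succ'] using
      ih (h'.congr (G := fun i => deriv (F i)) hs fun i r hr => (hd i r hr).deriv)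

theorem deriv (hs : IsOpen s) (h : DerivBound s (n + 1) F W) :
    DerivBound s n (fun i => deriv (F i)) W := by
  obtain ⟨-, F', hd, h'⟩ := h
  exact h'.congr hs fun i r hr => (hd i r hr).deriv

end DerivBound

theorem one_le_jap (x : ℝ) : 1 ≤ jap x :=
  Real.one_le_sqrt.2 (by nlinarith [sq_nonneg x])

theorem jap_sq (x : ℝ) : jap x ^ 2 = 1 + x ^ 2 := Real.sq_sqrt (by positivity)

theorem jap_le_one_add {x : ℝ} (hx : 0 ≤ x) : jap x ≤ 1 + x :=
  Real.sqrt_le_iff.2 ⟨by positivity, by nlinarith⟩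

theorem self_le_jap (x : ℝ) : x ≤ jap x := Real.le_sqrt_of_sq_le (by linarith)

theorem hasDerivAt_tanh (x : ℝ) : HasDerivAt Real.tanh (1 - Real.tanh x ^ 2) x := by
  have hc := (Real.cosh_pos x).ne'
  have h := (Real.hasDerivAt_sinh x).div (Real.hasDerivAt_cosh x) hc
  have e : Real.tanh = fun y => Real.sinh y / Real.cosh y := funext Real.tanh_eq_sinh_div_cosh
  rw [e]
  refine h.congr_deriv ?_
  beta_reduce
  field_simp

theorem one_sub_tanh_sq_le (x : ℝ) : 1 - Real.tanh x ^ 2 ≤ 4 * Real.exp (-(2 * x)) := by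
  have hc := Real.cosh_pos x
  have h : Real.exp x / 2 ≤ Real.cosh x := by
    rw [Real.cosh_eq]; linarith [Real.exp_pos (-x)]
  have e : 1 - Real.tanh x ^ 2 = 1 / Real.cosh x ^ 2 := by
    rw [Real.tanh_eq_sinh_div_cosh]
    field_simp
    linarith [Real.cosh_sq x]
  have e2 : 4 * Real.exp (-(2 * x)) = 1 / (Real.exp x / 2) ^ 2 := by
    rw [Real.exp_neg, two_mul, Real.exp_add]
    field_simp
    norm_num
  rw [e, e2]
  have := Real.exp_pos x
  gcongr

theorem tanh_le_two_mul {x : ℝ} (hx : 0 ≤ x) : Real.tanh x ≤ 2 * x := by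
  rw [Real.tanh_eq_sinh_div_cosh, div_le_iff₀ (Real.cosh_pos x), Real.sinh_eq, Real.cosh_eq]
  have h1 : -(2 * x) + 1 ≤ Real.exp (-(2 * x)) := Real.add_one_le_exp _
  have h2 : Real.exp (-x) = Real.exp x * Real.exp (-(2 * x)) := by
    rw [← Real.exp_add]; congr 1; ring
  nlinarith [Real.exp_pos x, mul_nonneg hx (Real.exp_pos (-x)).le]

theorem div_one_add_le_tanh {x : ℝ} (hx : 0 ≤ x) : x / (1 + x) ≤ Real.tanh x := by
  rw [Real.tanh_eq_sinh_div_cosh, div_le_div_iff₀ (by positivity) (Real.cosh_pos x)]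
  have h1 : x ≤ Real.sinh x := Real.self_le_sinh_iff.2 hx
  have h2 : Real.cosh x - Real.sinh x ≤ 1 := by
    rw [Real.cosh_sub_sinh]; exact Real.exp_le_one_iff.2 (by linarith)
  nlinarith

/-- Admissible pairs `(β, λ)`. -/
abbrev Params : Type := {p : ℝ × ℝ // 0 ≤ p.1 ∧ 0 < p.2}

theorem exists_one_sub_tanh_sq_le (N : ℕ) : ∃ C, 0 ≤ C ∧ ∀ lam : ℝ, 0 < lam →
    ∀ r ∈ Set.Ioo (1 / 4 : ℝ) 4, |1 - Real.tanh (lam * r) ^ 2| ≤ C * (jap lam ^ N)⁻¹ := by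
  refine ⟨4 * (4 ^ N * N.factorial * Real.exp (1 / 4)), by positivity, fun lam hl r hr => ?_⟩
  have hj : 0 < jap lam := zero_lt_one.trans_le (one_le_jap lam)
  have hnn : 0 ≤ 1 - Real.tanh (lam * r) ^ 2 := by
    have := Real.tanh_lt_one (lam * r)
    have := Real.neg_one_lt_tanh (lam * r)
    nlinarith
  rw [abs_of_nonneg hnn, ← div_eq_mul_inv, le_div_iff₀ (by positivity)]
  have h1 : jap lam ^ N ≤ 4 ^ N * N.factorial * Real.exp (1 / 4) * Real.exp (lam / 4) := by
    have h := Real.pow_div_factorial_le_exp (x := (1 + lam) / 4) (by positivity) N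
    rw [div_pow, div_div, div_le_iff₀ (by positivity), add_div, Real.exp_add] at h
    calc jap lam ^ N ≤ (1 + lam) ^ N := by gcongr; exact jap_le_one_add hl.le
      _ ≤ _ := h
      _ = _ := by ring
  have h2 : 1 - Real.tanh (lam * r) ^ 2 ≤ 4 * Real.exp (-(lam / 4)) := by
    refine (one_sub_tanh_sq_le _).trans ?_
    gcongr
    nlinarith [hr.1]
  calc (1 - Real.tanh (lam * r) ^ 2) * jap lam ^ N
      ≤ (4 * Real.exp (-(lam / 4))) *
          (4 ^ N * N.factorial * Real.exp (1 / 4) * Real.exp (lam / 4)) := by gcongr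
    _ = 4 * (4 ^ N * N.factorial * Real.exp (1 / 4)) *
          (Real.exp (-(lam / 4)) * Real.exp (lam / 4)) := by ring
    _ = _ := by rw [← Real.exp_add]; simp

theorem hasDerivAt_tanh_mul (a r : ℝ) :
    HasDerivAt (fun x => Real.tanh (a * x)) (a * (1 - Real.tanh (a * r) ^ 2)) r := by
  have h := (hasDerivAt_tanh (a * r)).comp r ((hasDerivAt_id r).const_mul a)
  refine h.congr_deriv ?_
  simp [mul_comm]

theorem derivBound_tanh_and_one_sub_tanh_sq (n : ℕ) :
    DerivBound (Set.Ioo (1 / 4 : ℝ) 4) n (fun (i : Params) r => Real.tanh (i.1.2 * r))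
        (fun _ => 1) ∧
      ∀ N : ℕ, DerivBound (Set.Ioo (1 / 4 : ℝ) 4) n
        (fun (i : Params) r => 1 - Real.tanh (i.1.2 * r) ^ 2) (fun i => (jap i.1.2 ^ N)⁻¹) := by
  have hT : ∃ C, 0 ≤ C ∧ ∀ (i : Params), ∀ r ∈ Set.Ioo (1 / 4 : ℝ) 4,
      |Real.tanh (i.1.2 * r)| ≤ C * 1 := ⟨1, zero_le_one, fun i r _ => by
    rw [mul_one]; exact (Real.abs_tanh_lt_one _).le⟩
  have hQ : ∀ N : ℕ, ∃ C, 0 ≤ C ∧ ∀ (i : Params), ∀ r ∈ Set.Ioo (1 / 4 : ℝ) 4,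
      |1 - Real.tanh (i.1.2 * r) ^ 2| ≤ C * (jap i.1.2 ^ N)⁻¹ := fun N => by
    obtain ⟨C, hC, h⟩ := exists_one_sub_tanh_sq_le N
    exact ⟨C, hC, fun i => h i.1.2 i.2.2⟩
  have hconst : ∀ (n : ℕ) (c : ℝ), DerivBound (Set.Ioo (1 / 4 : ℝ) 4) n
      (fun (i : Params) _ => c * i.1.2) (fun i => jap i.1.2) := fun n c =>
    DerivBound.const (abs_nonneg c) (fun i => zero_le_one.trans (one_le_jap _)) fun i => by
      rw [abs_mul, abs_of_pos i.2.2]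
      exact mul_le_mul_of_nonneg_left (self_le_jap _) (abs_nonneg c)
  induction n with
  | zero => exact ⟨hT, hQ⟩
  | succ n ih =>
    obtain ⟨ihT, ihQ⟩ := ih
    refine ⟨⟨hT, _, fun i r _ => hasDerivAt_tanh_mul i.1.2 r, ?_⟩, fun N =>
      ⟨hQ N, fun i r => (-2 * i.1.2) * (1 - Real.tanh (i.1.2 * r) ^ 2) * Real.tanh (i.1.2 * r),
        fun i r _ => ?_, ?_⟩⟩
    · have h := (hconst n 1).mul (ihQ 1)
      simp only [one_mul] at h
      refine h.weight_mono zero_le_one fun i => ?_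
      have : jap i.1.2 ≠ 0 := (zero_lt_one.trans_le (one_le_jap _)).ne'
      simp [this]
    · have h := ((hasDerivAt_tanh_mul i.1.2 r).pow 2).const_sub 1
      refine h.congr_deriv ?_
      push_cast
      ring
    · refine (((hconst n (-2)).mul (ihQ (N + 1))).mul ihT).weight_mono zero_le_one fun i => ?_
      have : jap i.1.2 ≠ 0 := (zero_lt_one.trans_le (one_le_jap _)).ne'
      apply le_of_eq
      rw [pow_succ]
      field_simp

theorem derivBound_tanh (n : ℕ) :
    DerivBound (Set.Ioo (1 / 4 : ℝ) 4) n (fun (i : Params) r => Real.tanh (i.1.2 * r))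
      (fun i => i.1.2 * (jap i.1.2)⁻¹) := by
  have hb : ∃ C, 0 ≤ C ∧ ∀ (i : Params), ∀ r ∈ Set.Ioo (1 / 4 : ℝ) 4,
      |Real.tanh (i.1.2 * r)| ≤ C * (i.1.2 * (jap i.1.2)⁻¹) := by
    refine ⟨9, by norm_num, fun i r hr => ?_⟩
    have hl := i.2.2
    have hj : 0 < jap i.1.2 := zero_lt_one.trans_le (one_le_jap _)
    have hx : 0 ≤ i.1.2 * r := mul_nonneg hl.le (by linarith [hr.1])
    have hT : 0 ≤ Real.tanh (i.1.2 * r) :=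
      (div_nonneg hx (by linarith)).trans (div_one_add_le_tanh hx)
    rw [abs_of_nonneg hT, ← div_eq_mul_inv, ← mul_div_assoc, le_div_iff₀ hj]
    have h1 := tanh_le_two_mul hx
    have h2 := (Real.tanh_lt_one (i.1.2 * r)).le
    have h3 := mul_le_mul_of_nonneg_left (jap_le_one_add hl.le) hT
    nlinarith [hr.2]
  cases n with
  | zero => exact hb
  | succ n =>
    refine ⟨hb, _, fun i r _ => hasDerivAt_tanh_mul i.1.2 r, ?_⟩
    have hc : DerivBound (Set.Ioo (1 / 4 : ℝ) 4) n (fun (i : Params) _ => i.1.2)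
        (fun i => i.1.2) :=
      DerivBound.const zero_le_one (fun i => i.2.2.le) fun i => by
        rw [abs_of_pos i.2.2, one_mul]
    simpa using hc.mul ((derivBound_tanh_and_one_sub_tanh_sq n).2 1)

/-- The size of `m_β(λ r)²` for `r ∼ 1`. -/
def mSymbSqWeight (i : Params) : ℝ :=
  i.1.2 * (1 + i.1.1 * i.1.2 ^ 2) * (i.1.2 * (jap i.1.2)⁻¹)

/-- The square of `m_β(λ r)`. -/
def mSymbSq (i : Params) (r : ℝ) : ℝ :=
  i.1.2 * r * (1 + i.1.1 * (i.1.2 * r) ^ 2) * Real.tanh (i.1.2 * r)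

theorem mSymbSqWeight_pos (i : Params) : 0 < mSymbSqWeight i := by
  have hl := i.2.2
  have hb := i.2.1
  have hj : 0 < jap i.1.2 := zero_lt_one.trans_le (one_le_jap _)
  unfold mSymbSqWeight
  positivity

theorem derivBound_mSymbSq (n : ℕ) :
    DerivBound (Set.Ioo (1 / 4 : ℝ) 4) n mSymbSq mSymbSqWeight := by
  have hid : DerivBound (Set.Ioo (1 / 4 : ℝ) 4) n (fun (_ : Params) r => r) (fun _ => 1) :=
    DerivBound.id (K := 4) fun r hr => abs_le.2 ⟨by linarith [hr.1], hr.2.le⟩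
  have hl : DerivBound (Set.Ioo (1 / 4 : ℝ) 4) n (fun (i : Params) _ => i.1.2)
      (fun i => i.1.2) :=
    DerivBound.const zero_le_one (fun i => i.2.2.le) fun i => by rw [abs_of_pos i.2.2, one_mul]
  have hw : ∀ i : Params, 0 ≤ i.1.1 * i.1.2 ^ 2 := fun i => mul_nonneg i.2.1 (sq_nonneg _)
  have hone : DerivBound (Set.Ioo (1 / 4 : ℝ) 4) n (fun (_ : Params) _ => (1 : ℝ))
      (fun i => 1 + i.1.1 * i.1.2 ^ 2) :=
    DerivBound.const zero_le_one (fun i => by linarith [hw i]) fun i => by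
      rw [abs_one]; linarith [hw i]
  have hq : DerivBound (Set.Ioo (1 / 4 : ℝ) 4) n (fun (i : Params) _ => i.1.1 * i.1.2 ^ 2)
      (fun i => 1 + i.1.1 * i.1.2 ^ 2) :=
    DerivBound.const zero_le_one (fun i => by linarith [hw i]) fun i => by
      rw [abs_of_nonneg (hw i)]; linarith [hw i]
  have hq' : DerivBound (Set.Ioo (1 / 4 : ℝ) 4) n
      (fun (i : Params) r => i.1.1 * i.1.2 ^ 2 * r * r) (fun i => 1 + i.1.1 * i.1.2 ^ 2) := by
    simpa using (hq.mul hid).mul hid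
  have h := ((hl.mul hid).mul (hone.add hq')).mul (derivBound_tanh n)
  refine (h.congr isOpen_Ioo fun i r _ => ?_).weight_mono zero_le_one fun i => ?_
  · unfold mSymbSq; ring
  · unfold mSymbSqWeight; simp

theorem tanh_lower_bound {lam r : ℝ} (hl : 0 < lam) (hr : r ∈ Set.Ioo (1 / 4 : ℝ) 4) :
    1 / 8 * (lam * (jap lam)⁻¹) ≤ Real.tanh (lam * r) := by
  have hr0 : 0 < r := by linarith [hr.1]
  have hj1 := one_le_jap lam
  have hj : 0 < jap lam := zero_lt_one.trans_le hj1
  refine le_trans ?_ (div_one_add_le_tanh (mul_pos hl hr0).le)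
  rw [← div_eq_mul_inv, ← mul_div_assoc, div_le_div_iff₀ hj (by positivity)]
  have h1 := self_le_jap lam
  have : 1 / 8 * (1 + lam * r) ≤ r * jap lam := by nlinarith [hr.1]
  nlinarith

theorem one_add_lower_bound {β lam r : ℝ} (hb : 0 ≤ β) (hr : r ∈ Set.Ioo (1 / 4 : ℝ) 4) :
    1 / 16 * (1 + β * lam ^ 2) ≤ 1 + β * (lam * r) ^ 2 := by
  have h : 1 / 16 ≤ r ^ 2 := by nlinarith [hr.1]
  nlinarith [mul_le_mul_of_nonneg_left h (mul_nonneg hb (sq_nonneg lam))]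

theorem leading_lower_bound (i : Params) {r : ℝ} (hr : r ∈ Set.Ioo (1 / 4 : ℝ) 4) :
    1 / 128 * mSymbSqWeight i ≤
      i.1.2 * (1 + i.1.1 * (i.1.2 * r) ^ 2) * Real.tanh (i.1.2 * r) := by
  have hl := i.2.2
  have hb := i.2.1
  have hj : 0 < jap i.1.2 := zero_lt_one.trans_le (one_le_jap _)
  calc 1 / 128 * mSymbSqWeight i
      = i.1.2 * (1 / 16 * (1 + i.1.1 * i.1.2 ^ 2)) * (1 / 8 * (i.1.2 * (jap i.1.2)⁻¹)) := by
        unfold mSymbSqWeight; ring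
    _ ≤ _ := by
        gcongr
        · exact one_add_lower_bound hb hr
        · exact tanh_lower_bound hl hr

theorem mSymbSq_lower_bound (i : Params) {r : ℝ} (hr : r ∈ Set.Ioo (1 / 4 : ℝ) 4) :
    1 / 512 * mSymbSqWeight i ≤ mSymbSq i r := by
  have h := leading_lower_bound i hr
  have hW := mSymbSqWeight_pos i
  have e : mSymbSq i r =
      r * (i.1.2 * (1 + i.1.1 * (i.1.2 * r) ^ 2) * Real.tanh (i.1.2 * r)) := by
    unfold mSymbSq; ring
  rw [e]
  nlinarith [hr.1, mul_le_mul_of_nonneg_left h (show (0 : ℝ) ≤ r by linarith [hr.1])]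

theorem hasDerivAt_mSymbSq (i : Params) (r : ℝ) : HasDerivAt (mSymbSq i)
    (i.1.2 * (1 + 3 * i.1.1 * (i.1.2 * r) ^ 2) * Real.tanh (i.1.2 * r) +
      i.1.2 * r * (1 + i.1.1 * (i.1.2 * r) ^ 2) *
        (i.1.2 * (1 - Real.tanh (i.1.2 * r) ^ 2))) r := by
  have h0 : HasDerivAt (fun x => i.1.2 * x) i.1.2 r := by
    simpa using (hasDerivAt_id r).const_mul i.1.2
  have h := (h0.mul (((h0.pow 2).const_mul i.1.1).const_add 1)).mul (hasDerivAt_tanh_mul i.1.2 r)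
  refine h.congr_deriv ?_
  simp only [Pi.mul_apply, Pi.pow_apply]
  push_cast
  ring

theorem deriv_mSymbSq_lower_bound (i : Params) {r : ℝ} (hr : r ∈ Set.Ioo (1 / 4 : ℝ) 4) :
    1 / 128 * mSymbSqWeight i ≤ deriv (mSymbSq i) r := by
  rw [(hasDerivAt_mSymbSq i r).deriv]
  have hl := i.2.2
  have hb := i.2.1
  have hr0 : 0 < r := by linarith [hr.1]
  have hj : 0 < jap i.1.2 := zero_lt_one.trans_le (one_le_jap _)
  have hT : 0 ≤ Real.tanh (i.1.2 * r) := le_trans (by positivity) (tanh_lower_bound hl hr)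
  have hQ : 0 ≤ 1 - Real.tanh (i.1.2 * r) ^ 2 := by nlinarith [Real.tanh_lt_one (i.1.2 * r)]
  have h1 : 0 ≤ i.1.2 * r * (1 + i.1.1 * (i.1.2 * r) ^ 2) *
        (i.1.2 * (1 - Real.tanh (i.1.2 * r) ^ 2)) := by positivity
  have h2 : 0 ≤ i.1.2 * (2 * i.1.1 * (i.1.2 * r) ^ 2) * Real.tanh (i.1.2 * r) := by positivity
  linarith [leading_lower_bound i hr]

theorem one_div_deriv_mSymb (i : Params) {r : ℝ} (hr : r ∈ Set.Ioo (1 / 4 : ℝ) 4) :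
    1 / deriv (fun y => mSymb i.1.1 (i.1.2 * y)) r =
      2 * (mSymbSq i r ^ (1 / 2 : ℝ) * deriv (mSymbSq i) r ^ (-1 : ℝ)) := by
  have hW := mSymbSqWeight_pos i
  have hP : 0 < mSymbSq i r := lt_of_lt_of_le (by positivity) (mSymbSq_lower_bound i hr)
  have h := ((hasDerivAt_mSymbSq i r).differentiableAt.hasDerivAt).sqrt hP.ne'
  have e : (fun y => mSymb i.1.1 (i.1.2 * y)) = fun y => Real.sqrt (mSymbSq i y) := rfl
  rw [e, h.deriv, Real.rpow_neg_one, ← Real.sqrt_eq_rpow, one_div_div]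
  ring

theorem mSymbSqWeight_rpow (i : Params) :
    mSymbSqWeight i ^ (1 / 2 : ℝ) * mSymbSqWeight i ^ (-1 : ℝ) =
      i.1.2⁻¹ * (jap (Real.sqrt i.1.1 * i.1.2))⁻¹ * jap i.1.2 ^ ((1 : ℝ) / 2) := by
  have hl := i.2.2
  have hj : 0 < jap i.1.2 := zero_lt_one.trans_le (one_le_jap _)
  have hJ : 0 < jap (Real.sqrt i.1.1 * i.1.2) := zero_lt_one.trans_le (one_le_jap _)
  have hs : 0 < Real.sqrt (jap i.1.2) := Real.sqrt_pos.2 hj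
  have e : mSymbSqWeight i =
      (i.1.2 * jap (Real.sqrt i.1.1 * i.1.2) / Real.sqrt (jap i.1.2)) ^ 2 := by
    rw [div_pow, mul_pow, jap_sq, mul_pow, Real.sq_sqrt i.2.1, Real.sq_sqrt hj.le]
    unfold mSymbSqWeight
    ring
  rw [Real.rpow_neg_one, ← Real.sqrt_eq_rpow, ← Real.sqrt_eq_rpow, e,
    Real.sqrt_sq (by positivity)]
  field_simp

/-- Corollary on `m_{β,λ}(r) := m_β(λr)`: for every `k ≥ 0` there is a constant `C_k`
depending only on `k` such that for `β ∈ {0,1}`, `λ > 0` and `1/2 ≤ r ≤ 2`,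
`|∂_r^k (1/m_{β,λ}'(r))| ≤ C_k λ^{-1} ⟨√β λ⟩^{-1} ⟨λ⟩^{1/2}`. -/
theorem iteratedDeriv_inv_deriv_mSymb_scaled (k : ℕ) :
    ∃ C > (0 : ℝ), ∀ β : ℝ, β = 0 ∨ β = 1 → ∀ lam : ℝ, 0 < lam →
      ∀ r ∈ Set.Icc (1 / 2 : ℝ) 2,
        |iteratedDeriv k (fun x => 1 / deriv (fun y => mSymb β (lam * y)) x) r| ≤
          C * (lam⁻¹ * (jap (Real.sqrt β * lam))⁻¹ * jap lam ^ ((1 : ℝ) / 2)) := by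
  have hsqrt := (derivBound_mSymbSq k).rpow mSymbSqWeight_pos (c := 1 / 512) (by norm_num)
    (fun i r hr => mSymbSq_lower_bound i hr) (1 / 2)
  have hinv := ((derivBound_mSymbSq (k + 1)).deriv isOpen_Ioo).rpow mSymbSqWeight_pos
    (c := 1 / 128) (by norm_num) (fun i r hr => deriv_mSymbSq_lower_bound i hr) (-1)
  have htwo : DerivBound (Set.Ioo (1 / 4 : ℝ) 4) k (fun (_ : Params) _ => (2 : ℝ))
      (fun _ => 1) :=
    DerivBound.const zero_le_two (fun _ => zero_le_one) fun _ => by norm_num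
  obtain ⟨C, hC, h⟩ := ((htwo.mul (hsqrt.mul hinv)).congr isOpen_Ioo
    fun i r hr => one_div_deriv_mSymb i hr).abs_iteratedDeriv_le isOpen_Ioo
  refine ⟨C + 1, by positivity, fun β hβ lam hl r hr => ?_⟩
  have hβ0 : 0 ≤ β := by rcases hβ with rfl | rfl <;> norm_num
  have hr' : r ∈ Set.Ioo (1 / 4 : ℝ) 4 := ⟨by linarith [hr.1], by linarith [hr.2]⟩
  have hk := h ⟨(β, lam), hβ0, hl⟩ r hr'
  rw [one_mul, mSymbSqWeight_rpow] at hk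
  refine hk.trans ?_
  have hj : 0 < jap lam := zero_lt_one.trans_le (one_le_jap _)
  have hJ : 0 < jap (Real.sqrt β * lam) := zero_lt_one.trans_le (one_le_jap _)
  gcongr
  linarith
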